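/- Let G be a connected twin graph on an odd number n of vertices, with the t = (n−1)/2 pairwise disjoint twin pairs C_1,…,C_t and the remaining (non-twin) vertex v_n, and let π* = {C_1,…,C_t,{v_n}} be the twin partition of G. If the quotient Laplacian L_{π*} admits a non-trivial almost equitable partition of the quotient graph of the form ρ = {S_1,…,S_m, {{v_n}}}, where {S_1,…,S_m} is a partition of {C_1,…,C_t} with m < t, then G is strongly uncontrollable, i.e., (L(G), b) is uncontrollable for every b ∈ {0,1}^n. -/

import Mathlib

open Classical Matrix

noncomputable def lap {n : ℕ} (G : SimpleGraph (Fin n)) : Matrix (Fin n) (Fin n) ℝ :=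
  Matrix.of fun i j =>
    (if i = j then ((G.neighborSet i).ncard : ℝ) else 0) - (if G.Adj i j then 1 else 0)

def IsTwin {n : ℕ} (G : SimpleGraph (Fin n)) (u v : Fin n) : Prop :=
  u ≠ v ∧ G.neighborSet u \ {v} = G.neighborSet v \ {u}

def IsEigenvalue {n : ℕ} (M : Matrix (Fin n) (Fin n) ℝ) (μ : ℝ) : Prop :=
  ∃ x : Fin n → ℝ, x ≠ 0 ∧ M.mulVec x = μ • x

def HasSimpleSpectrum {n : ℕ} (M : Matrix (Fin n) (Fin n) ℝ) : Prop :=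
  ∃ μ : Fin n → ℝ, Function.Injective μ ∧ ∀ i, IsEigenvalue M (μ i)

def Controllable {n : ℕ} (M : Matrix (Fin n) (Fin n) ℝ) (b : Fin n → ℝ) : Prop :=
  Submodule.span ℝ (Set.range fun k : Fin n => (M ^ (k : ℕ)).mulVec b) = ⊤

def StronglyUncontrollable {n : ℕ} (G : SimpleGraph (Fin n)) : Prop :=
  G.Connected ∧ HasSimpleSpectrum (lap G) ∧
    ∀ b : Fin n → ℝ, (∀ i, b i = 0 ∨ b i = 1) → ¬ Controllable (lap G) b

def Pmat {n k : ℕ} (c : Fin n → Fin k) : Matrix (Fin n) (Fin k) ℝ :=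
  Matrix.of fun i j => if c i = j then 1 else 0

def IsAEP {n k : ℕ} (G : SimpleGraph (Fin n)) (c : Fin n → Fin k) : Prop :=
  ∀ i j : Fin k, i ≠ j → ∀ x y : Fin n, c x = i → c y = i →
    (G.neighborSet x ∩ {z | c z = j}).ncard = (G.neighborSet y ∩ {z | c z = j}).ncard

noncomputable def quotLap {n k : ℕ} (G : SimpleGraph (Fin n)) (c : Fin n → Fin k) :
    Matrix (Fin k) (Fin k) ℝ :=
  ((Pmat c)ᵀ * Pmat c)⁻¹ * (Pmat c)ᵀ * lap G * Pmat c

def IsQuotAEP {k m : ℕ} (Lq : Matrix (Fin k) (Fin k) ℝ) (r : Fin k → Fin m) : Prop :=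
  ∀ a b : Fin m, a ≠ b → ∀ C C' : Fin k, r C = a → r C' = a →
    ∑ C'' ∈ Finset.univ.filter (fun C'' => r C'' = b), Lq C C'' =
      ∑ C'' ∈ Finset.univ.filter (fun C'' => r C'' = b), Lq C' C''

def IsGraphAut {n : ℕ} (G : SimpleGraph (Fin n)) (σ : Equiv.Perm (Fin n)) : Prop :=
  ∀ x y, G.Adj x y ↔ G.Adj (σ x) (σ y)

def joinOne {n : ℕ} (G : SimpleGraph (Fin n)) : SimpleGraph (Fin (n + 1)) where
  Adj x y := x ≠ y ∧ ((x : ℕ) = n ∨ (y : ℕ) = n ∨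
    ∃ (hx : (x : ℕ) < n) (hy : (y : ℕ) < n), G.Adj ⟨x, hx⟩ ⟨y, hy⟩)
  symm := by
    constructor
    rintro x y ⟨hxy, h⟩
    refine ⟨hxy.symm, ?_⟩
    rcases h with h | h | ⟨hx, hy, h⟩
    exacts [Or.inr (Or.inl h), Or.inl h, Or.inr (Or.inr ⟨hy, hx, h.symm⟩)]
  loopless := ⟨fun x h => h.1 rfl⟩

def joinTwo {n : ℕ} (G : SimpleGraph (Fin n)) : SimpleGraph (Fin (n + 2)) where
  Adj x y := x ≠ y ∧ (((x : ℕ) < n ∧ n ≤ (y : ℕ)) ∨ ((y : ℕ) < n ∧ n ≤ (x : ℕ)) ∨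
    ∃ (hx : (x : ℕ) < n) (hy : (y : ℕ) < n), G.Adj ⟨x, hx⟩ ⟨y, hy⟩)
  symm := by
    constructor
    rintro x y ⟨hxy, h⟩
    refine ⟨hxy.symm, ?_⟩
    rcases h with h | h | ⟨hx, hy, h⟩
    exacts [Or.inr (Or.inl h), Or.inl h, Or.inr (Or.inr ⟨hy, hx, h.symm⟩)]
  loopless := ⟨fun x h => h.1 rfl⟩

def addPendant {n : ℕ} (G : SimpleGraph (Fin n)) (v : Fin n) : SimpleGraph (Fin (n + 1)) where
  Adj x y := ((x : ℕ) = n ∧ (y : ℕ) = (v : ℕ)) ∨ ((y : ℕ) = n ∧ (x : ℕ) = (v : ℕ)) ∨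
    ∃ (hx : (x : ℕ) < n) (hy : (y : ℕ) < n), G.Adj ⟨x, hx⟩ ⟨y, hy⟩
  symm := by
    constructor
    rintro x y (h | h | ⟨hx, hy, h⟩)
    exacts [Or.inr (Or.inl h), Or.inl h, Or.inr (Or.inr ⟨hy, hx, h.symm⟩)]
  loopless := by
    constructor
    intro x h
    have hv := v.isLt
    rcases h with ⟨h1, h2⟩ | ⟨h1, h2⟩ | ⟨hx, hy, h⟩
    · omega
    · omega
    · exact G.loopless.irrefl _ h

lemma unctrl_of_inv {n : ℕ} (M : Matrix (Fin n) (Fin n) ℝ) (b : Fin n → ℝ)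
    (V : Submodule ℝ (Fin n → ℝ)) (hV : V ≠ ⊤) (hb : b ∈ V)
    (hM : ∀ y ∈ V, M.mulVec y ∈ V) : ¬ Controllable M b := by
  intro h
  apply hV
  rw [eq_top_iff, ← h, Submodule.span_le]
  rintro _ ⟨k, rfl⟩
  have : ∀ k : ℕ, (M ^ k).mulVec b ∈ V := by
    intro k
    induction k with
    | zero => simpa using hb
    | succ k ih =>
      rw [pow_succ', ← Matrix.mulVec_mulVec]
      exact hM _ ih
  exact this k

lemma lap_symm {n : ℕ} (G : SimpleGraph (Fin n)) (x y : Fin n) : lap G x y = lap G y x := by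
  by_cases h : x = y
  · rw [h]
  · simp [lap, h, Ne.symm h, G.adj_comm x y]

lemma lap_row {n : ℕ} (G : SimpleGraph (Fin n)) (x : Fin n) : ∑ y, lap G x y = 0 := by
  simp only [lap, Matrix.of_apply, Finset.sum_sub_distrib, Finset.sum_ite_eq, Finset.mem_univ,
    if_true, Finset.sum_boole]
  rw [sub_eq_zero, Set.ncard_eq_toFinset_card']
  congr 2
  ext y
  simp

lemma twin_adj {n : ℕ} {G : SimpleGraph (Fin n)} {u v : Fin n} (h : IsTwin G u v) (z : Fin n)
    (h1 : z ≠ u) (h2 : z ≠ v) : lap G z u = lap G z v := by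
  have := Set.ext_iff.1 h.2 z
  simp only [Set.mem_diff, SimpleGraph.mem_neighborSet, Set.mem_singleton_iff, h1, h2,
    not_false_eq_true, and_true] at this
  simp [lap, h1, h2, G.adj_comm z, this]

lemma twin_diag {n : ℕ} {G : SimpleGraph (Fin n)} {u v : Fin n} (h : IsTwin G u v) :
    lap G u u = lap G v v := by
  have h2 := h.2
  have : (G.neighborSet u).ncard = (G.neighborSet v).ncard := by
    by_cases ha : G.Adj u v
    · have e1 := Set.ncard_diff_singleton_add_one (s := G.neighborSet u) (a := v) ha
        (Set.toFinite _)
      have e2 := Set.ncard_diff_singleton_add_one (s := G.neighborSet v) (a := u) ha.symm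
        (Set.toFinite _)
      rw [← e1, ← e2, h2]
    · rw [Set.diff_singleton_eq_self (by simpa using ha),
        Set.diff_singleton_eq_self (by simpa [G.adj_comm] using ha)] at h2
      rw [h2]
  simp [lap, this]

lemma twin_inv {n : ℕ} {G : SimpleGraph (Fin n)} {u v : Fin n} (h : IsTwin G u v)
    (y : Fin n → ℝ) (hy : y u = y v) : (lap G).mulVec y u = (lap G).mulVec y v := by
  rw [← sub_eq_zero]
  simp only [Matrix.mulVec, dotProduct]
  rw [← Finset.sum_sub_distrib]
  have hz : ∀ x ∈ Finset.univ, x ∉ ({u, v} : Finset (Fin n)) →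
      lap G u x * y x - lap G v x * y x = 0 := by
    intro x _ hx
    simp only [Finset.mem_insert, Finset.mem_singleton, not_or] at hx
    rw [lap_symm G u x, lap_symm G v x, twin_adj h x hx.1 hx.2, sub_self]
  rw [← Finset.sum_subset (Finset.subset_univ _) hz, Finset.sum_pair h.1, hy, twin_diag h,
    lap_symm G u v]
  ring

def cs {n k : ℕ} (c : Fin n → Fin k) (j : Fin k) (y : Fin n → ℝ) : ℝ :=
  ∑ x, if c x = j then y x else 0

lemma cs_mul {n k : ℕ} (c : Fin n → Fin k) (f : Fin k → ℝ) (y : Fin n → ℝ) :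
    ∑ x, f (c x) * y x = ∑ j, f j * cs c j y := by
  simp only [cs, Finset.mul_sum]
  rw [Finset.sum_comm]
  refine Finset.sum_congr rfl fun x _ => ?_
  simp

lemma quotLap_apply {n k : ℕ} (G : SimpleGraph (Fin n)) (c : Fin n → Fin k)
    (hd : ∀ j, cs c j 1 ≠ 0) (i j : Fin k) :
    quotLap G c i j = (cs c i 1)⁻¹ * cs c i (fun x => cs c j (fun y => lap G x y)) := by
  have hN : (Pmat c)ᵀ * Pmat c = Matrix.diagonal fun j => cs c j 1 := by
    ext i j
    rw [Matrix.mul_apply, Matrix.diagonal_apply]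
    by_cases h : i = j
    · subst h
      rw [if_pos rfl, cs]
      refine Finset.sum_congr rfl fun x _ => ?_
      by_cases h1 : c x = i <;> simp [Pmat, h1]
    · rw [if_neg h]
      refine Finset.sum_eq_zero fun x _ => ?_
      simp only [Pmat, Matrix.transpose_apply, Matrix.of_apply]
      by_cases h1 : c x = i
      · have : c x ≠ j := fun h2 => h (h1.symm.trans h2)
        simp [this]
      · simp [h1]
  have hI : (Matrix.diagonal fun j => cs c j 1)⁻¹ = Matrix.diagonal fun j => (cs c j 1)⁻¹ := by
    apply Matrix.inv_eq_right_inv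
    rw [Matrix.diagonal_mul_diagonal, ← Matrix.diagonal_one]
    congr 1
    ext j
    exact mul_inv_cancel₀ (hd j)
  unfold quotLap
  rw [hN, hI, Matrix.mul_assoc, Matrix.mul_assoc, Matrix.diagonal_mul]
  congr 1
  simp [Matrix.mul_apply, Pmat, cs]

theorem stmt5 {t n : ℕ} (hn : n = 2 * t + 1)
    (G : SimpleGraph (Fin n)) (hconn : G.Connected)
    (hspec : HasSimpleSpectrum (lap G))
    (u v : Fin t → Fin n) (a : Fin n)
    (htwin : ∀ i, IsTwin G (u i) (v i))
    (hna : ∀ w, ¬ IsTwin G a w)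
    (c : Fin n → Fin (t + 1))
    (hc : ∀ (i : Fin t) (x : Fin n), c x = Fin.castLE (by omega) i ↔ (x = u i ∨ x = v i))
    (hca : ∀ x, c x = ⟨t, by omega⟩ ↔ x = a)
    {m : ℕ} (hm : m < t) (r : Fin (t + 1) → Fin (m + 1))
    (hrsurj : Function.Surjective r)
    (hrlast : ∀ j : Fin (t + 1), r j = Fin.last m ↔ (j : ℕ) = t)
    (hρ : IsQuotAEP (quotLap G c) r) :
    StronglyUncontrollable G := by
  refine ⟨hconn, hspec, fun b hb => ?_⟩
  by_cases hcase : ∃ i, b (u i) = b (v i)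
  · obtain ⟨i, hi⟩ := hcase
    refine unctrl_of_inv _ b
      { carrier := {y | y (u i) = y (v i)}
        add_mem' := fun {p q} hp hq => by
          simp only [Set.mem_setOf_eq, Pi.add_apply] at *
          rw [hp, hq]
        zero_mem' := rfl
        smul_mem' := fun s p hp => by
          simp only [Set.mem_setOf_eq, Pi.smul_apply] at *
          rw [hp] } ?_ hi (fun y hy => twin_inv (htwin i) y hy)
    intro h
    have h1 : (Pi.single (u i) 1 : Fin n → ℝ) ∈ (⊤ : Submodule ℝ (Fin n → ℝ)) := trivial
    rw [← h] at h1
    change (Pi.single (u i) 1 : Fin n → ℝ) (u i) = (Pi.single (u i) 1 : Fin n → ℝ) (v i) at h1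
    rw [Pi.single_eq_same, Pi.single_eq_of_ne (htwin i).1.symm] at h1
    exact one_ne_zero h1
  · push Not at hcase
    have hle : t ≤ t + 1 := by omega
    have hl : t < t + 1 := by omega
    have hjc : ∀ j : Fin (t + 1), (∃ i : Fin t, j = Fin.castLE hle i) ∨ j = ⟨t, hl⟩ := by
      intro j
      by_cases h : (j : ℕ) < t
      · exact Or.inl ⟨⟨j, h⟩, rfl⟩
      · right
        ext
        have := j.isLt
        simp only
        omega
    have cs1 : ∀ (i : Fin t) (y : Fin n → ℝ),
        cs c (Fin.castLE hle i) y = y (u i) + y (v i) := by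
      intro i y
      rw [cs, ← Finset.sum_filter, ← Finset.sum_pair (htwin i).1]
      congr 1
      ext x
      simp [hc i x]
    have cs2 : ∀ (y : Fin n → ℝ), cs c ⟨t, hl⟩ y = y a := by
      intro y
      simp [cs, hca]
    have hd : ∀ j, cs c j 1 ≠ 0 := by
      intro j
      rcases hjc j with ⟨i, rfl⟩ | rfl
      · rw [cs1]; norm_num
      · rw [cs2]; norm_num
    have hrr : ∀ j j', r j = r j' → (j = j' ∧ j = ⟨t, hl⟩) ∨
        ∃ i i' : Fin t, j = Fin.castLE hle i ∧ j' = Fin.castLE hle i' := by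
      intro j j' h
      have e1 := hrlast j
      have e2 := hrlast j'
      rw [h] at e1
      rcases hjc j with ⟨i, rfl⟩ | rfl
      · rcases hjc j' with ⟨i', rfl⟩ | rfl
        · exact Or.inr ⟨i, i', rfl, rfl⟩
        · have := e1.1 (e2.2 rfl)
          have := i.isLt
          simp at *
          omega
      · left
        have := e2.1 (e1.2 rfl)
        exact ⟨Fin.ext this.symm, rfl⟩
    have hdr : ∀ j j', r j = r j' → cs c j 1 = cs c j' 1 := by
      intro j j' h
      rcases hrr j j' h with ⟨h, -⟩ | ⟨i, i', rfl, rfl⟩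
      · rw [h]
      · rw [cs1, cs1]; rfl
    -- the column-constant matrix W
    have hW0 : ∀ (j : Fin (t + 1)) (i : Fin t),
        cs c j (fun x => lap G x (u i)) = cs c j (fun x => lap G x (v i)) := by
      intro j i
      rcases hjc j with ⟨k, rfl⟩ | rfl
      · rw [cs1, cs1]
        by_cases hk : k = i
        · subst hk
          rw [twin_diag (htwin k), lap_symm G (v k) (u k), add_comm]
        · have key : ∀ x, (x = u k ∨ x = v k) → x ≠ u i ∧ x ≠ v i := by
            intro x hx
            rw [← hc k x] at hx
            have := mt (hc i x).2 (by
              rw [hx]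
              intro h
              exact hk (Fin.ext (by simpa using congrArg Fin.val h)))
            exact not_or.1 this
          have k1 := key (u k) (Or.inl rfl)
          have k2 := key (v k) (Or.inr rfl)
          rw [twin_adj (htwin i) _ k1.1 k1.2, twin_adj (htwin i) _ k2.1 k2.2]
      · rw [cs2, cs2]
        have : ¬ (a = u i ∨ a = v i) := by
          rw [← hc i a, (hca a).2 rfl]
          intro h
          have := congrArg Fin.val h
          have := i.isLt
          simp at *
          omega
        rw [not_or] at this
        exact twin_adj (htwin i) _ this.1 this.2
    have hW : ∀ (j : Fin (t + 1)), ∃ f : Fin (t + 1) → ℝ, ∀ x,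
        cs c j (fun z => lap G z x) = f (c x) := by
      intro j
      refine ⟨fun k => if h : (k : ℕ) < t then cs c j (fun z => lap G z (u ⟨k, h⟩)) else
        cs c j (fun z => lap G z a), fun x => ?_⟩
      rcases hjc (c x) with ⟨i, hi⟩ | hi
      · have : (c x : ℕ) < t := by rw [hi]; exact i.isLt
        have e : (⟨(c x : ℕ), this⟩ : Fin t) = i := by ext; simp [hi]
        simp only [this, dif_pos, e]
        rcases (hc i x).1 hi with rfl | rfl
        · rfl
        · exact (hW0 j i).symm
      · have : ¬ (c x : ℕ) < t := by rw [hi]; simp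
        simp only [this, dif_neg, not_false_eq_true]
        rw [(hca x).1 hi]
    choose f hf using hW
    have hLy : ∀ j y, cs c j ((lap G).mulVec y) = ∑ k, f j k * cs c k y := by
      intro j y
      rw [← cs_mul]
      simp only [← hf, cs, Matrix.mulVec, dotProduct, Finset.sum_mul]
      rw [Finset.sum_comm]
      refine Finset.sum_congr rfl fun x _ => ?_
      split_ifs
      · rfl
      · simp
    have hQ : ∀ j k, quotLap G c j k = (cs c j 1)⁻¹ * (f j k * cs c k 1) := by
      intro j k
      rw [quotLap_apply G c hd]
      congr 1
      have h1 := hLy j (fun x => if c x = k then 1 else 0)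
      have h2 : (fun x => cs c k (fun y => lap G x y)) =
          (lap G).mulVec (fun x => if c x = k then 1 else 0) := by
        ext x
        simp [cs, Matrix.mulVec, dotProduct]
      rw [h2, h1]
      rw [Finset.sum_eq_single k]
      · congr 1
        simp only [cs]
        refine Finset.sum_congr rfl fun x _ => ?_
        split_ifs <;> rfl
      · intro l _ hl
        have : cs c l (fun x => if c x = k then (1:ℝ) else 0) = 0 := by
          refine Finset.sum_eq_zero fun x _ => ?_
          by_cases g1 : c x = l
          · have g2 : c x ≠ k := by rw [g1]; exact hl
            simp [g2]
          · simp [g1]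
        rw [this, mul_zero]
      · simp
    have hQ0 : ∀ j, ∑ k, quotLap G c j k = 0 := by
      intro j
      simp only [hQ]
      rw [← Finset.mul_sum, ← hLy]
      have : (lap G).mulVec 1 = 0 := by
        ext x
        simpa [Matrix.mulVec, dotProduct] using lap_row G x
      rw [this]
      simp [cs]
    have hρ' : ∀ j j', r j = r j' → ∀ p,
        ∑ k ∈ Finset.univ.filter (fun k => r k = p), quotLap G c j k =
        ∑ k ∈ Finset.univ.filter (fun k => r k = p), quotLap G c j' k := by
      intro j j' h p
      by_cases hp : r j = p
      · have key : ∀ j, ∑ q, ∑ k ∈ Finset.univ.filter (fun k => r k = q), quotLap G c j k = 0 := by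
          intro j
          rw [Finset.sum_fiberwise, hQ0]
        have k1 := key j
        have k2 := key j'
        rw [← Finset.add_sum_erase _ _ (Finset.mem_univ p)] at k1 k2
        have : ∑ q ∈ Finset.univ.erase p,
              ∑ k ∈ Finset.univ.filter (fun k => r k = q), quotLap G c j k =
            ∑ q ∈ Finset.univ.erase p,
              ∑ k ∈ Finset.univ.filter (fun k => r k = q), quotLap G c j' k := by
          refine Finset.sum_congr rfl fun q hq => ?_
          exact hρ p q (Finset.ne_of_mem_erase hq).symm j j' hp (h ▸ hp)
        linarith
      · exact hρ (r j) p hp j j' rfl h.symm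
    refine unctrl_of_inv _ b
      { carrier := {y | ∀ j j', r j = r j' → cs c j y = cs c j' y}
        add_mem' := fun {p q} hp hq => by
          intro j j' h
          have e : ∀ j, cs c j (p + q) = cs c j p + cs c j q := by
            intro j
            simp only [cs, ← Finset.sum_add_distrib]
            refine Finset.sum_congr rfl fun x _ => ?_
            split_ifs <;> simp
          rw [e, e, hp j j' h, hq j j' h]
        zero_mem' := by
          intro j j' h
          simp [cs]
        smul_mem' := fun s p hp => by
          intro j j' h
          have e : ∀ j, cs c j (s • p) = s * cs c j p := by
            intro j
            simp only [cs, Finset.mul_sum]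
            refine Finset.sum_congr rfl fun x _ => ?_
            split_ifs <;> simp
          rw [e, e, hp j j' h] } ?_ ?_ ?_
    · intro h
      obtain ⟨j, j', hne, hj⟩ := Fintype.exists_ne_map_eq_of_card_lt r (by simpa using hm)
      rcases hrr j j' hj with ⟨h, -⟩ | ⟨i, i', rfl, rfl⟩
      · exact hne h
      have h1 : (Pi.single (u i) 1 : Fin n → ℝ) ∈ (⊤ : Submodule ℝ (Fin n → ℝ)) := trivial
      rw [← h] at h1
      have h2 := h1 _ _ hj
      have h3 : ¬ (u i = u i' ∨ u i = v i') := by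
        rw [← hc i' (u i), (hc i (u i)).2 (Or.inl rfl)]
        exact hne
      rw [not_or] at h3
      rw [cs1, cs1, Pi.single_eq_same, Pi.single_eq_of_ne (htwin i).1.symm,
        Pi.single_eq_of_ne (Ne.symm h3.1), Pi.single_eq_of_ne (Ne.symm h3.2)] at h2
      norm_num at h2
    · intro j j' h
      have e : ∀ i, b (u i) + b (v i) = 1 := by
        intro i
        have := hcase i
        rcases hb (u i) with h1 | h1 <;> rcases hb (v i) with h2 | h2 <;> rw [h1, h2] at this ⊢ <;>
          simp at this ⊢
      rcases hrr j j' h with ⟨h, -⟩ | ⟨i, i', rfl, rfl⟩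
      · rw [h]
      · rw [cs1, cs1, e, e]
    · intro y hy j j' h
      obtain ⟨g, hg⟩ : ∃ g : Fin (m + 1) → ℝ, ∀ k, cs c k y = cs c k 1 * g (r k) := by
        choose s hs using hrsurj
        refine ⟨fun p => cs c (s p) y / cs c (s p) 1, fun k => ?_⟩
        have h1 : r (s (r k)) = r k := hs _
        simp only
        rw [hy _ _ h1, hdr _ _ h1, mul_div_cancel₀ _ (hd k)]
      have key : ∀ j, cs c j ((lap G).mulVec y) = cs c j 1 *
          ∑ p, g p * ∑ k ∈ Finset.univ.filter (fun k => r k = p), quotLap G c j k := by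
        intro j
        have e : ∑ p, g p * ∑ k ∈ Finset.univ.filter (fun k => r k = p), quotLap G c j k =
            ∑ k, g (r k) * quotLap G c j k := by
          rw [← Finset.sum_fiberwise Finset.univ r (fun k => g (r k) * quotLap G c j k)]
          refine Finset.sum_congr rfl fun p _ => ?_
          rw [Finset.mul_sum]
          refine Finset.sum_congr rfl fun k hk => ?_
          rw [(Finset.mem_filter.1 hk).2]
        rw [e, hLy, Finset.mul_sum]
        refine Finset.sum_congr rfl fun k _ => ?_
        rw [hg, hQ]
        have := hd j
        field_simp
      rw [key, key, hdr j j' h]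
      simp only [hρ' j j' h]
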